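/- (Strong converse) For every λ ∈ (0,1) there exists a constant K (depending only on λ, a and d) such that for every classical–quantum channel W from a finite alphabet X with |X| = a into the density operators on ℂ^d and every (n,λ)-code (f,D) for W, |M| ≤ exp₂(n·C(W) + K·√n), where C(W) = max_P I(P;W). -/

import Mathlib

open Matrix BigOperators Finset
open scoped Classical ComplexOrder

noncomputable section

/-- Square complex matrices of size `d` (operators on `ℂ^d`). -/
abbrev Mat (d : ℕ) := Matrix (Fin d) (Fin d) ℂ

/-- Operators on the `n`-fold tensor power `(ℂ^d)^{⊗n}`, indexed by `Fin n → Fin d`. -/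
abbrev MatPow (d n : ℕ) := Matrix (Fin n → Fin d) (Fin n → Fin d) ℂ

/-- Tensor product `A 0 ⊗ A 1 ⊗ ⋯ ⊗ A (n-1)` of a family of `d × d` matrices. -/
def tensorPow {d n : ℕ} (A : Fin n → Mat d) : MatPow d n :=
  Matrix.of fun j k => ∏ i, A i (j i) (k i)

/-- Exponential to base 2. -/
def exp2 (t : ℝ) : ℝ := (2 : ℝ) ^ t

/-- `P` is a probability distribution on the finite set `X`. -/
def IsProbDist {X : Type*} [Fintype X] (P : X → ℝ) : Prop :=
  (∀ x, 0 ≤ P x) ∧ ∑ x, P x = 1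

/-- `ρ` is a density operator (a state): positive semidefinite with trace one. -/
def IsState {ι : Type*} [Fintype ι] [DecidableEq ι] (ρ : Matrix ι ι ℂ) : Prop :=
  ρ.PosSemidef ∧ ρ.trace = 1

/-- `N(x|x^n)`: number of occurrences of the letter `x` in the sequence `xs`. -/
def countIn {X : Type*} {n : ℕ} (x : X) (xs : Fin n → X) : ℕ :=
  (Finset.univ.filter fun i => xs i = x).card

/-- The variance-typical set `T^n_{P,δ}`. -/
def typicalSet {X : Type*} [Fintype X] (n : ℕ) (P : X → ℝ) (δ : ℝ) :
    Finset (Fin n → X) :=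
  Finset.univ.filter fun xs => ∀ x : X,
    |(countIn x xs : ℝ) - n * P x| ≤ δ * Real.sqrt n * Real.sqrt (P x * (1 - P x))

/-- Product (i.i.d.) probability `P^{⊗n}(A)` of a set `A` of sequences. -/
def prodProb {X : Type*} [Fintype X] {n : ℕ} (P : X → ℝ) (A : Finset (Fin n → X)) : ℝ :=
  ∑ xs ∈ A, ∏ i, P (xs i)

/-- Shannon entropy to base 2. -/
def shannonEntropy {X : Type*} [Fintype X] (P : X → ℝ) : ℝ :=
  -∑ x, P x * Real.logb 2 (P x)

/-- von Neumann entropy to base 2, `H(ρ) = -Tr(ρ log₂ ρ)`, via the eigenvalues. -/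
def vnEntropy {d : ℕ} (ρ : Mat d) : ℝ :=
  if h : ρ.IsHermitian then -∑ i, h.eigenvalues i * Real.logb 2 (h.eigenvalues i) else 0

/-- The constant `K = 2 log₂(e) / e`. -/
def Kconst : ℝ := 2 * Real.logb 2 (Real.exp 1) / Real.exp 1

/-- A diagonalization `ρ = Σ_j R j • π j` into one-dimensional mutually orthogonal
eigenprojectors, with eigenvalue list `R` a probability distribution. -/
def IsDiagonalization {d : ℕ} (ρ : Mat d) (R : Fin d → ℝ) (π : Fin d → Mat d) : Prop :=
  (∀ j, (π j).PosSemidef) ∧ (∀ j, π j * π j = π j) ∧ (∀ j, (π j).trace = 1) ∧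
    (∀ j k, j ≠ k → π j * π k = 0) ∧ (∑ j, π j = 1) ∧
    ρ = ∑ j, (R j : ℂ) • π j ∧ IsProbDist R

/-- The variance-typical projector `Π^n_{ρ,δ}` of a state with fixed diagonalization
`(R, π)`. -/
def typicalProj {d : ℕ} (n : ℕ) (R : Fin d → ℝ) (π : Fin d → Mat d) (δ : ℝ) : MatPow d n :=
  ∑ js ∈ typicalSet n R δ, tensorPow fun i => π (js i)

/-- `B` is an `η`-shadow of the state `σ`: `0 ≤ B ≤ 1` and `Tr(σB) ≥ η`. -/
def IsShadow {ι : Type*} [Fintype ι] [DecidableEq ι] (σ B : Matrix ι ι ℂ) (η : ℝ) : Prop :=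
  B.PosSemidef ∧ ((1 : Matrix ι ι ℂ) - B).PosSemidef ∧ η ≤ (Matrix.trace (σ * B)).re

/-- Average state `PW = Σ_x P(x) W_x` of a cq-channel under input distribution `P`. -/
def avgState {X : Type*} [Fintype X] {d : ℕ} (P : X → ℝ) (W : X → Mat d) : Mat d :=
  ∑ x, (P x : ℂ) • W x

/-- Conditional von Neumann entropy `H(W|P) = Σ_x P(x) H(W_x)`. -/
def condEntropy {X : Type*} [Fintype X] {d : ℕ} (P : X → ℝ) (W : X → Mat d) : ℝ :=
  ∑ x, P x * vnEntropy (W x)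

/-- Mutual information `I(P;W) = H(PW) − H(W|P)`. -/
def mutualInfo {X : Type*} [Fintype X] {d : ℕ} (P : X → ℝ) (W : X → Mat d) : ℝ :=
  vnEntropy (avgState P W) - condEntropy P W

/-- Capacity `C(W) = max_P I(P;W)`. -/
def capacity {X : Type*} [Fintype X] {d : ℕ} (W : X → Mat d) : ℝ :=
  sSup {c | ∃ P : X → ℝ, IsProbDist P ∧ c = mutualInfo P W}

/-- `(f, D)` (with message set `M` inside the outcome index set `M'`) is an
`(n,λ)`-code for the cq-channel `W`: the `D m` are positive semidefinite, sum to the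
identity, and each message is decoded correctly with probability at least `1 - λ`. -/
def IsCode {X : Type*} [Fintype X] {d n : ℕ} (W : X → Mat d) (lam : ℝ)
    {M' : Type*} [Fintype M'] (M : Finset M') (f : M' → Fin n → X)
    (D : M' → MatPow d n) : Prop :=
  (∀ m, (D m).PosSemidef) ∧ (∑ m, D m = 1) ∧
    ∀ m ∈ M, 1 - lam ≤ (Matrix.trace (tensorPow (fun i => W (f m i)) * D m)).re

/-- `N(n,λ)`: maximal size of an `(n,λ)`-code for `W`. -/
def maxCodeSize {X : Type*} [Fintype X] (d : ℕ) (W : X → Mat d) (n : ℕ) (lam : ℝ) : ℕ :=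
  sSup {k | ∃ (M' : Type) (_ : Fintype M') (M : Finset M') (f : M' → Fin n → X)
    (D : M' → MatPow d n), IsCode W lam M f D ∧ M.card = k}

/-- Trace norm `‖A‖₁ = Tr|A|`: the sum of the singular values. -/
def traceNorm {ι : Type*} [Fintype ι] [DecidableEq ι] (A : Matrix ι ι ℂ) : ℝ :=
  ∑ i, Real.sqrt ((Matrix.posSemidef_conjTranspose_mul_self A).1.eigenvalues i)

/-- Trace distance `D(ρ,σ) = ½‖ρ−σ‖₁`. -/
def traceDist {ι : Type*} [Fintype ι] [DecidableEq ι] (ρ σ : Matrix ι ι ℂ) : ℝ :=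
  traceNorm (ρ - σ) / 2

/-- (Pure-state) fidelity `F(ρ,σ) = Tr(ρσ)`. -/
def fidelity {ι : Type*} [Fintype ι] [DecidableEq ι] (ρ σ : Matrix ι ι ℂ) : ℝ :=
  (Matrix.trace (ρ * σ)).re

/-- A pure state: the rank-one orthogonal projector `|ψ⟩⟨ψ|` onto the span of a
unit vector `ψ`. -/
def IsPureState {ι : Type*} [Fintype ι] (ρ : Matrix ι ι ℂ) : Prop :=
  ∃ ψ : ι → ℂ, (∑ i, star (ψ i) * ψ i) = 1 ∧ ρ = Matrix.vecMulVec ψ (star ψ)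

/-- The set of eigenvalue-index sequences `js` that are variance-typical, with
constant `δ`, for the distribution `q x` on each block `I_x = {i : xs i = x}`. -/
def condTypicalSet {X : Type*} [Fintype X] {n d : ℕ} (xs : Fin n → X)
    (q : X → Fin d → ℝ) (δ : ℝ) : Finset (Fin n → Fin d) :=
  Finset.univ.filter fun js => ∀ (x : X) (k : Fin d),
    |((Finset.univ.filter fun i => xs i = x ∧ js i = k).card : ℝ) - (countIn x xs : ℝ) * q x k|
      ≤ δ * Real.sqrt (countIn x xs) * Real.sqrt (q x k * (1 - q x k))

/-- Conditional variance-typical projector `Π^n_{W,δ}(x^n) = ⊗_{x∈X} Π^{I_x}_{W_x,δ}`,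
with respect to fixed diagonalizations `W_x = Σ_j (q x j) • (π x j)`. -/
def condTypicalProj {X : Type*} [Fintype X] {d : ℕ} {n : ℕ} (xs : Fin n → X)
    (q : X → Fin d → ℝ) (π : X → Fin d → Mat d) (δ : ℝ) : MatPow d n :=
  ∑ js ∈ condTypicalSet xs q δ, tensorPow fun i => π (xs i) (js i)

/-!
There are only polynomially many types, so at a cost of `O(√n)` in the exponent all codewords may
be assumed to have the same type `P`. Fix an eigenbasis of `PW` and let `E` be the projection onto
the tensor eigenvectors of `(PW)^{⊗n}` with eigenvalue at least `2^{-n H(PW) - δ√n}`: its rank is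
at most `2^{n H(PW) + δ√n}`, and by Chebyshev's inequality every codeword state has mass at most
`O(1/δ²)` outside it, because measuring `W_{x^n}` letter by letter in the eigenbasis of `PW` gives
independent outcomes whose average distribution is the spectrum of `PW`. Again by Chebyshev's
inequality, `W_{x^n}` has mass at most `O(1/δ²)` on its eigenvectors with eigenvalue above
`t = 2^{-n H(W|P) + δ√n}`. Discarding both tails by means of the pinching inequality
`ρ ≤ 2 (E ρ E + (1 - E) ρ (1 - E))`, one finds `1 - λ - O(1/δ²) ≤ 2 t Tr(D_m E)` for every
message `m`. Since `∑ Tr(D_m E) = Tr E`, summing over the messages gives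
`|M| (1 - λ - O(1/δ²)) ≤ 2 · 2^{n I(P;W) + 2δ√n}`, and it remains to choose `δ` large.
-/

section Probability

open MeasureTheory ProbabilityTheory

variable {ι κ : Type*} [Fintype ι] [Fintype κ]

lemma IsProbDist.le_one {p : κ → ℝ} (hp : IsProbDist p) (k : κ) : p k ≤ 1 :=
  hp.2 ▸ single_le_sum (fun j _ => hp.1 j) (mem_univ k)

/-- A probability distribution on a finite set as a `PMF`, giving access to the
measure-theoretic variance and to Chebyshev's inequality. -/
def IsProbDist.toPMF {p : κ → ℝ} (hp : IsProbDist p) : PMF κ :=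
  PMF.ofFintype (fun k => ENNReal.ofReal (p k)) <| by
    rw [← ENNReal.ofReal_sum_of_nonneg fun k _ => hp.1 k, hp.2, ENNReal.ofReal_one]

lemma IsProbDist.integral_toPMF [MeasurableSpace κ] [MeasurableSingletonClass κ] {p : κ → ℝ}
    (hp : IsProbDist p) (g : κ → ℝ) : ∫ k, g k ∂hp.toPMF.toMeasure = ∑ k, p k * g k := by
  rw [PMF.integral_eq_sum]
  exact sum_congr rfl fun k _ => by
    simp [toPMF, ENNReal.toReal_ofReal (hp.1 k)]

lemma IsProbDist.real_pi_toPMF [MeasurableSpace κ] [MeasurableSingletonClass κ] {p : ι → κ → ℝ}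
    (hp : ∀ i, IsProbDist (p i)) (S : Finset (ι → κ)) :
    (Measure.pi fun i => (hp i).toPMF.toMeasure).real S
      = ∑ js ∈ S, ∏ i, p i (js i) := by
  rw [← sum_measureReal_singleton]
  refine sum_congr rfl fun js _ => ?_
  simp only [measureReal_def, Measure.pi_singleton,
    ENNReal.toReal_prod, PMF.toMeasure_apply_singleton _ _ (measurableSet_singleton _)]
  exact prod_congr rfl fun i _ => ENNReal.toReal_ofReal ((hp i).1 _)

lemma IsProbDist.pi [DecidableEq ι] {p : ι → κ → ℝ} (hp : ∀ i, IsProbDist (p i)) :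
    IsProbDist fun js : ι → κ => ∏ i, p i (js i) :=
  ⟨fun _ => prod_nonneg fun i _ => (hp i).1 _, by simp [← Fintype.prod_sum, (hp _).2]⟩

theorem sum_prod_le_of_le_abs_sum_sub_mean [DecidableEq ι] {p g : ι → κ → ℝ}
    (hp : ∀ i, IsProbDist (p i)) {τ : ℝ} (hτ : 0 < τ) :
    ∑ js : ι → κ with τ ≤ |∑ i, g i (js i) - ∑ i, ∑ k, p i k * g i k|, ∏ i, p i (js i)
      ≤ (∑ i, ∑ k, p i k * g i k ^ 2) / τ ^ 2 := by
  let _ : MeasurableSpace κ := ⊤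
  have : DiscreteMeasurableSpace κ := ⟨fun _ => trivial⟩
  let μ i := (hp i).toPMF.toMeasure
  let G : (ι → κ) → ℝ := ∑ i, fun js => g i (js i)
  have hmean : ∫ js, G js ∂Measure.pi μ = ∑ i, ∑ k, p i k * g i k := by
    simp only [G, Finset.sum_apply]
    rw [integral_finsetSum _ fun i _ => .of_finite]
    refine sum_congr rfl fun i _ => ?_
    rw [integral_comp_eval .of_discrete, (hp i).integral_toPMF]
  have hvar : Var[G; Measure.pi μ] ≤ ∑ i, ∑ k, p i k * g i k ^ 2 := by
    rw [variance_sum_pi fun i => .of_discrete]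
    refine sum_le_sum fun i _ => ?_
    rw [← (hp i).integral_toPMF]
    exact variance_le_expectation_sq .of_discrete
  have hcheb := ENNReal.toReal_mono ENNReal.ofReal_ne_top
    (meas_ge_le_variance_div_sq (μ := Measure.pi μ) (X := G) .of_discrete hτ)
  rw [hmean, ENNReal.toReal_ofReal (div_nonneg (variance_nonneg _ _) (sq_nonneg τ))] at hcheb
  rw [← IsProbDist.real_pi_toPMF hp]
  exact le_trans (by simpa [measureReal_def, G] using hcheb) (by gcongr)

theorem sum_prod_le_of_le_abs_logb_sub {p r : ι → κ → ℝ} {m τ : ℝ} (hp : ∀ i, IsProbDist (p i))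
    (hm : ∑ i, ∑ k, p i k * Real.logb 2 (r i k) = m) (hτ : 0 < τ) {S : Finset (ι → κ)}
    (hr : ∀ js ∈ S, ∏ i, p i (js i) ≠ 0 → ∏ i, r i (js i) ≠ 0)
    (hS : ∀ js ∈ S, ∏ i, r i (js i) ≠ 0 → τ ≤ |Real.logb 2 (∏ i, r i (js i)) - m|) :
    ∑ js ∈ S, ∏ i, p i (js i) ≤ (∑ i, ∑ k, p i k * Real.logb 2 (r i k) ^ 2) / τ ^ 2 := by
  rw [← sum_filter_ne_zero]
  refine (sum_le_sum_of_subset_of_nonneg ?_ fun js _ _ => (IsProbDist.pi hp).1 js).trans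
    (sum_prod_le_of_le_abs_sum_sub_mean hp hτ)
  intro js hjs
  obtain ⟨hjS, hpjs⟩ := mem_filter.mp hjs
  have hrjs := hr js hjS hpjs
  rw [mem_filter, hm, ← Real.logb_prod _ _ fun i hi => prod_ne_zero_iff.mp hrjs i hi]
  exact ⟨mem_univ _, hS js hjS hrjs⟩

variable [DecidableEq ι]

theorem sum_prod_le_of_prod_lt_rpow {p r : ι → κ → ℝ} {m τ : ℝ} (hp : ∀ i, IsProbDist (p i))
    (hr : ∀ i k, 0 ≤ r i k) (hpr : ∀ i k, r i k = 0 → p i k = 0)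
    (hm : ∑ i, ∑ k, p i k * Real.logb 2 (r i k) = m) (hτ : 0 < τ) :
    ∑ js : ι → κ with ∏ i, r i (js i) < 2 ^ (m - τ), ∏ i, p i (js i)
      ≤ (∑ i, ∑ k, p i k * Real.logb 2 (r i k) ^ 2) / τ ^ 2 := by
  refine sum_prod_le_of_le_abs_logb_sub hp hm hτ (fun js _ hjs => ?_) fun js hjs hne => ?_
  · exact prod_ne_zero_iff.mpr fun i hi h => prod_ne_zero_iff.mp hjs i hi (hpr i _ h)
  · have hpos := (prod_nonneg fun i _ => hr i (js i)).lt_of_ne' hne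
    have hlt := (Real.logb_lt_iff_lt_rpow one_lt_two hpos).mpr (mem_filter.mp hjs).2
    exact (by linarith : τ ≤ -(_ - _)).trans (neg_le_abs _)

theorem sum_prod_le_of_rpow_lt_prod {p r : ι → κ → ℝ} {m τ : ℝ} (hp : ∀ i, IsProbDist (p i))
    (hm : ∑ i, ∑ k, p i k * Real.logb 2 (r i k) = m) (hτ : 0 < τ) :
    ∑ js : ι → κ with 2 ^ (m + τ) < ∏ i, r i (js i), ∏ i, p i (js i)
      ≤ (∑ i, ∑ k, p i k * Real.logb 2 (r i k) ^ 2) / τ ^ 2 := by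
  have hpos : ∀ js ∈ ({js | 2 ^ (m + τ) < ∏ i, r i (js i)} :
      Finset (ι → κ)), 0 < ∏ i, r i (js i) :=
    fun js hjs => (Real.rpow_pos_of_pos two_pos _).trans (mem_filter.mp hjs).2
  refine sum_prod_le_of_le_abs_logb_sub hp hm hτ (fun js hjs _ => (hpos js hjs).ne')
    fun js hjs _ => ?_
  have hlt := (Real.lt_logb_iff_rpow_lt one_lt_two (hpos js hjs)).mpr (mem_filter.mp hjs).2
  exact (by linarith : τ ≤ _ - _).trans (le_abs_self _)

lemma IsProbDist.card_mul_le_one {p : κ → ℝ} (hp : IsProbDist p) (c : ℝ) :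
    #{k | c ≤ p k} * c ≤ 1 :=
  calc #{k | c ≤ p k} * c = #{k | c ≤ p k} • c := (nsmul_eq_mul _ _).symm
    _ ≤ ∑ k with c ≤ p k, p k := card_nsmul_le_sum _ _ _ fun _ hk => (mem_filter.mp hk).2
    _ ≤ ∑ k, p k := sum_le_sum_of_subset_of_nonneg (subset_univ _) fun k _ _ => hp.1 k
    _ = 1 := hp.2

lemma IsProbDist.card_filter_rpow_neg_le {p : κ → ℝ} (hp : IsProbDist p) (t : ℝ) :
    (#{k | (2 : ℝ) ^ (-t) ≤ p k} : ℝ) ≤ 2 ^ t := by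
  have h := hp.card_mul_le_one (2 ^ (-t))
  rwa [Real.rpow_neg two_pos.le, ← div_eq_mul_inv, div_le_one (by positivity),
    ← Real.rpow_neg two_pos.le] at h

end Probability

section Entropy

lemma mul_logb_two_sq_le {s : ℝ} (h0 : 0 ≤ s) (h1 : s ≤ 1) : s * Real.logb 2 s ^ 2 ≤ 16 := by
  rcases h0.eq_or_lt with rfl | hpos
  · simp
  have hsqrt : |Real.log √s * √s| ≤ 1 :=
    (Real.abs_log_mul_self_lt _ (Real.sqrt_pos.mpr hpos) (Real.sqrt_le_one.mpr h1)).le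
  rw [Real.log_sqrt h0, abs_le_one_iff_mul_self_le_one] at hsqrt
  have hlog : s * Real.log s ^ 2 ≤ 4 := by
    linear_combination 4 * hsqrt - Real.log s ^ 2 * Real.sq_sqrt h0
  have hlog2 : 1 / 4 ≤ Real.log 2 ^ 2 := by nlinarith [Real.log_two_gt_d9]
  rw [Real.logb, div_pow, mul_div_assoc', div_le_iff₀ (by positivity)]
  linarith

variable {κ : Type*} [Fintype κ]

lemma IsProbDist.sum_mul_logb_two_sq_le {p : κ → ℝ} (hp : IsProbDist p) :
    ∑ k, p k * Real.logb 2 (p k) ^ 2 ≤ 16 * Fintype.card κ := by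
  simpa [mul_comm] using
    sum_le_card_nsmul univ _ _ fun k _ => mul_logb_two_sq_le (hp.1 k) (hp.le_one k)

lemma shannonEntropy_eq_sum_negMulLog_div (p : κ → ℝ) :
    shannonEntropy p = (∑ k, Real.negMulLog (p k)) / Real.log 2 := by
  simp [shannonEntropy, Real.negMulLog, Real.logb, mul_div_assoc', sum_div, sum_neg_distrib,
    neg_div]

lemma shannonEntropy_nonneg {p : κ → ℝ} (hp : IsProbDist p) : 0 ≤ shannonEntropy p := by
  rw [shannonEntropy_eq_sum_negMulLog_div]
  exact div_nonneg (sum_nonneg fun k _ => Real.negMulLog_nonneg (hp.1 k) (hp.le_one k))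
    (Real.log_nonneg one_le_two)

lemma shannonEntropy_le_logb_card {p : κ → ℝ} (hp : IsProbDist p) :
    shannonEntropy p ≤ Real.logb 2 (Fintype.card κ) := by
  have hne : Nonempty κ := by
    by_contra h
    simpa [not_nonempty_iff.mp h] using hp.2
  have hcard : (0 : ℝ) < Fintype.card κ := by exact_mod_cast Fintype.card_pos
  have hjensen := Real.concaveOn_negMulLog.le_map_sum (t := univ)
    (w := fun _ : κ => (Fintype.card κ : ℝ)⁻¹) (p := p) (fun _ _ => by positivity)
    (by simp [hcard.ne']) fun k _ => hp.1 k
  simp only [smul_eq_mul, ← mul_sum, hp.2, mul_one] at hjensen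
  rw [shannonEntropy_eq_sum_negMulLog_div, Real.logb]
  gcongr
  rw [inv_mul_le_iff₀ hcard] at hjensen
  simpa [Real.negMulLog, hcard.ne'] using hjensen

end Entropy

section Operators

open scoped MatrixOrder Matrix.Norms.L2Operator

lemma le_two_nsmul_pinching {R : Type*} [Ring R] [PartialOrder R] [StarRing R]
    [StarOrderedRing R] {e a : R} (he : IsStarProjection e) (ha : 0 ≤ a) :
    a ≤ 2 • (e * a * e + (1 - e) * a * (1 - e)) := by
  have hreflect : 0 ≤ (e - (1 - e)) * a * (e - (1 - e)) :=
    (he.isSelfAdjoint.sub he.one_sub.isSelfAdjoint).conjugate_nonneg ha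
  rw [← sub_nonneg]
  convert hreflect using 1
  noncomm_ring

variable {ι : Type*} [Fintype ι]

lemma re_trace_mul_nonneg {A B : Matrix ι ι ℂ} (hA : 0 ≤ A) (hB : 0 ≤ B) :
    0 ≤ (A * B).trace.re := by
  classical
  obtain ⟨C, rfl⟩ := CStarAlgebra.nonneg_iff_eq_star_mul_self.mp hB
  rw [← mul_assoc, trace_mul_comm, ← mul_assoc]
  exact (Complex.le_def.mp
    (nonneg_iff_posSemidef.mp (star_right_conjugate_nonneg hA C)).trace_nonneg).1

lemma re_trace_mul_le_re_trace_mul {A B C : Matrix ι ι ℂ} (hAB : A ≤ B) (hC : 0 ≤ C) :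
    (A * C).trace.re ≤ (B * C).trace.re := by
  have h := re_trace_mul_nonneg (sub_nonneg.mpr hAB) hC
  rwa [sub_mul, trace_sub, Complex.sub_re, sub_nonneg] at h

variable [DecidableEq ι]

theorem re_trace_mul_le_of_le_smul_one {ρ D E : Matrix ι ι ℂ} {t : ℝ} (hρ : 0 ≤ ρ)
    (hρt : ρ ≤ t • 1) (hD : 0 ≤ D) (hD1 : D ≤ 1) (hE : IsStarProjection E) :
    (ρ * D).trace.re ≤ 2 * t * (D * E).trace.re + 2 * (ρ * (1 - E)).trace.re := by
  have hin : (E * ρ * E * D).trace.re ≤ t * (D * E).trace.re :=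
    calc (E * ρ * E * D).trace.re
        ≤ (E * (t • 1) * E * D).trace.re :=
          re_trace_mul_le_re_trace_mul (hE.isSelfAdjoint.conjugate_le_conjugate hρt) hD
      _ = t * (D * E).trace.re := by
          rw [mul_smul_comm, mul_one, smul_mul_assoc, hE.isIdempotentElem.eq, smul_mul_assoc,
            trace_smul, Complex.smul_re, smul_eq_mul, trace_mul_comm]
  have hout : ((1 - E) * ρ * (1 - E) * D).trace.re ≤ (ρ * (1 - E)).trace.re :=
    calc ((1 - E) * ρ * (1 - E) * D).trace.re
        = (D * ((1 - E) * ρ * (1 - E))).trace.re := by rw [trace_mul_comm]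
      _ ≤ (1 * ((1 - E) * ρ * (1 - E))).trace.re :=
          re_trace_mul_le_re_trace_mul hD1 (hE.one_sub.isSelfAdjoint.conjugate_nonneg hρ)
      _ = (ρ * (1 - E)).trace.re := by
          rw [one_mul, trace_mul_comm, ← mul_assoc, hE.one_sub.isIdempotentElem.eq,
            trace_mul_comm]
  have hpinch := re_trace_mul_le_re_trace_mul (le_two_nsmul_pinching hE hρ) hD
  rw [smul_mul_assoc, add_mul, trace_smul, trace_add, nsmul_eq_mul] at hpinch
  simp only [Nat.cast_ofNat, Complex.mul_re, Complex.re_ofNat, Complex.im_ofNat, zero_mul,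
    sub_zero, Complex.add_re] at hpinch
  linarith

/-- The operator `∑ⱼ c j |uⱼ⟩⟨uⱼ|`, where `uⱼ` is the `j`-th column of `U`, as a homomorphism of
star-algebras in the list `c` of eigenvalues. -/
def unitaryDiagonal (U : unitaryGroup ι ℂ) : (ι → ℝ) →⋆ₐ[ℝ] Matrix ι ι ℂ :=
  (Unitary.conjStarAlgAut ℝ (Matrix ι ι ℂ) U : Matrix ι ι ℂ →⋆ₐ[ℝ] Matrix ι ι ℂ).comp
    { (diagonalAlgHom ℝ).comp (Complex.ofRealAm.compLeft ι) with
      map_star' := fun c => by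
        change diagonal _ = star (diagonal _)
        rw [star_eq_conjTranspose, diagonal_conjTranspose]
        exact congrArg diagonal (funext fun j => (Complex.conj_ofReal _).symm) }

lemma unitaryDiagonal_apply (U : unitaryGroup ι ℂ) (c : ι → ℝ) :
    unitaryDiagonal U c
      = (U : Matrix ι ι ℂ) * diagonal (fun j => (c j : ℂ)) * star (U : Matrix ι ι ℂ) :=
  rfl

/-- The distribution of the outcome when `ρ` is measured in the orthonormal basis formed by the
columns of `V` (Born's rule). -/
def outcomeDist (V : unitaryGroup ι ℂ) (ρ : Matrix ι ι ℂ) (j : ι) : ℝ :=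
  (star (V : Matrix ι ι ℂ) * ρ * V) j j |>.re

lemma outcomeDist_unitaryDiagonal (V : unitaryGroup ι ℂ) (c : ι → ℝ) :
    outcomeDist V (unitaryDiagonal V c) = c := by
  ext j
  have h : star (V : Matrix ι ι ℂ) * unitaryDiagonal V c * V = diagonal fun j => (c j : ℂ) := by
    rw [unitaryDiagonal_apply, mul_assoc, mul_assoc, UnitaryGroup.star_mul_self, mul_one,
      ← mul_assoc, UnitaryGroup.star_mul_self, one_mul]
  simp [outcomeDist, h]

lemma re_trace_mul_unitaryDiagonal (ρ : Matrix ι ι ℂ) (V : unitaryGroup ι ℂ) (c : ι → ℝ) :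
    (ρ * unitaryDiagonal V c).trace.re = ∑ j, outcomeDist V ρ j * c j := by
  rw [unitaryDiagonal_apply, ← mul_assoc, trace_mul_comm, ← mul_assoc, ← mul_assoc, trace,
    Complex.re_sum]
  simp [outcomeDist]

lemma re_trace_unitaryDiagonal (U : unitaryGroup ι ℂ) (c : ι → ℝ) :
    (unitaryDiagonal U c).trace.re = ∑ j, c j := by
  rw [unitaryDiagonal_apply, trace_mul_comm, ← mul_assoc, UnitaryGroup.star_mul_self, one_mul,
    trace_diagonal]
  simp

lemma re_trace_mul_one_sub_unitaryDiagonal_indicator (ρ : Matrix ι ι ℂ) (V : unitaryGroup ι ℂ)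
    (A : Set ι) :
    (ρ * (1 - unitaryDiagonal V (A.indicator 1))).trace.re
      = ∑ j with j ∉ A, outcomeDist V ρ j := by
  rw [← map_one (unitaryDiagonal V), ← map_sub, ← Set.indicator_compl,
    re_trace_mul_unitaryDiagonal, sum_filter]
  simp [Set.indicator_apply]

lemma isStarProjection_unitaryDiagonal_indicator (V : unitaryGroup ι ℂ) (A : Set ι) :
    IsStarProjection (unitaryDiagonal V (A.indicator 1)) := by
  refine IsStarProjection.map ⟨?_, ?_⟩ _
  · ext j; by_cases hj : j ∈ A <;> simp [hj]
  · simp [IsSelfAdjoint]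

theorem re_trace_unitaryDiagonal_mul_le {U : unitaryGroup ι ℂ} {q : ι → ℝ} {D E : Matrix ι ι ℂ}
    {t : ℝ} (hq : 0 ≤ q) (ht : 0 ≤ t) (hD : 0 ≤ D) (hD1 : D ≤ 1) (hE : IsStarProjection E) :
    (unitaryDiagonal U q * D).trace.re ≤ ∑ j with t < q j, q j + 2 * t * (D * E).trace.re
      + 2 * (unitaryDiagonal U q * (1 - E)).trace.re := by
  let low : Set ι := {j | q j ≤ t}
  have hsplit : unitaryDiagonal U q
      = unitaryDiagonal U (low.indicator q) + unitaryDiagonal U (lowᶜ.indicator q) := by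
    rw [← map_add, Set.indicator_self_add_compl]
  have hnonneg (S : Set ι) : 0 ≤ unitaryDiagonal U (S.indicator q) :=
    map_nonneg _ (Set.indicator_nonneg fun j _ => hq j)
  have hlow : unitaryDiagonal U (low.indicator q) ≤ t • 1 := by
    rw [← map_one (unitaryDiagonal U), ← map_smul]
    refine OrderHomClass.mono _ fun j => ?_
    simpa using Set.indicator_apply_le' (s := low) (a := j) id fun _ => ht
  have hhigh : (unitaryDiagonal U (lowᶜ.indicator q) * D).trace.re ≤ ∑ j with t < q j, q j :=
    calc (unitaryDiagonal U (lowᶜ.indicator q) * D).trace.re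
        = (D * unitaryDiagonal U (lowᶜ.indicator q)).trace.re := by rw [trace_mul_comm]
      _ ≤ (1 * unitaryDiagonal U (lowᶜ.indicator q)).trace.re :=
          re_trace_mul_le_re_trace_mul hD1 (hnonneg lowᶜ)
      _ = ∑ j with t < q j, q j := by
          simp [re_trace_unitaryDiagonal, sum_filter, Set.indicator_apply, low]
  have h := re_trace_mul_le_of_le_smul_one (hnonneg low) hlow hD hD1 hE
  have h' := re_trace_mul_nonneg (hnonneg lowᶜ) hE.one_sub_nonneg
  rw [hsplit, add_mul, add_mul, trace_add, trace_add, Complex.add_re, Complex.add_re]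
  linarith

theorem card_mul_sub_le_two_mul_card {μ : Type*} [Fintype μ] {M : Finset μ} {D : μ → Matrix ι ι ℂ}
    {U : μ → unitaryGroup ι ℂ} {q : μ → ι → ℝ} {V : unitaryGroup ι ℂ} {A : Set ι} {p ε t : ℝ}
    (hD : ∀ m, 0 ≤ D m) (hDsum : ∑ m, D m = 1) (hq : ∀ m ∈ M, 0 ≤ q m) (ht : 0 ≤ t)
    (hdec : ∀ m ∈ M, p ≤ (unitaryDiagonal (U m) (q m) * D m).trace.re)
    (hhigh : ∀ m ∈ M, ∑ j with t < q m j, q m j ≤ ε)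
    (hout : ∀ m ∈ M, ∑ j with j ∉ A, outcomeDist V (unitaryDiagonal (U m) (q m)) j ≤ ε) :
    #M * (p - 3 * ε) ≤ 2 * t * #{j | j ∈ A} := by
  let E := unitaryDiagonal V (A.indicator 1)
  have hE : IsStarProjection E := isStarProjection_unitaryDiagonal_indicator V A
  calc #M * (p - 3 * ε) = ∑ m ∈ M, (p - 3 * ε) := by rw [sum_const, nsmul_eq_mul]
    _ ≤ ∑ m ∈ M, 2 * t * (D m * E).trace.re := sum_le_sum fun m hm => ?_
    _ ≤ ∑ m, 2 * t * (D m * E).trace.re := sum_le_sum_of_subset_of_nonneg (subset_univ _)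
        fun m _ _ => mul_nonneg (by positivity) (re_trace_mul_nonneg (hD m) hE.nonneg)
    _ = 2 * t * ((∑ m, D m) * E).trace.re := by
        rw [sum_mul, trace_sum, Complex.re_sum, mul_sum]
    _ = 2 * t * #{j | j ∈ A} := by
        simp [hDsum, E, re_trace_unitaryDiagonal, Set.indicator_apply]
  have hDm : D m ≤ 1 := hDsum ▸ single_le_sum (fun i _ => hD i) (mem_univ m)
  have hmain := re_trace_unitaryDiagonal_mul_le (U := U m) (hq m hm) ht (hD m) hDm hE
  rw [re_trace_mul_one_sub_unitaryDiagonal_indicator] at hmain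
  linarith [hdec m hm, hhigh m hm, hout m hm]

end Operators

section States

variable {ι : Type*} [Fintype ι] [DecidableEq ι]

lemma IsState.isProbDist_outcomeDist {ρ : Matrix ι ι ℂ} (hρ : IsState ρ) (V : unitaryGroup ι ℂ) :
    IsProbDist (outcomeDist V ρ) := by
  refine ⟨fun j => (Complex.le_def.mp
    (hρ.1.conjTranspose_mul_mul_same (V : Matrix ι ι ℂ)).diag_nonneg).1, ?_⟩
  simpa [hρ.2] using (re_trace_mul_unitaryDiagonal ρ V 1).symm

variable {d : ℕ}

lemma IsState.exists_eq_unitaryDiagonal {ρ : Mat d} (hρ : IsState ρ) :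
    ∃ (U : unitaryGroup (Fin d) ℂ) (q : Fin d → ℝ),
      IsProbDist q ∧ ρ = unitaryDiagonal U q ∧ vnEntropy ρ = shannonEntropy q := by
  have hH := hρ.1.isHermitian
  have hspec : ρ = unitaryDiagonal hH.eigenvectorUnitary hH.eigenvalues := hH.spectral_theorem
  refine ⟨_, hH.eigenvalues, ⟨hρ.1.eigenvalues_nonneg, ?_⟩, hspec, dif_pos hH⟩
  rw [← re_trace_unitaryDiagonal, ← hspec, hρ.2, Complex.one_re]

lemma IsState.vnEntropy_nonneg {ρ : Mat d} (hρ : IsState ρ) : 0 ≤ vnEntropy ρ := by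
  obtain ⟨_, q, hq, -, hent⟩ := hρ.exists_eq_unitaryDiagonal
  exact hent ▸ shannonEntropy_nonneg hq

lemma IsState.vnEntropy_le_logb {ρ : Mat d} (hρ : IsState ρ) : vnEntropy ρ ≤ Real.logb 2 d := by
  obtain ⟨_, q, hq, -, hent⟩ := hρ.exists_eq_unitaryDiagonal
  simpa [hent] using shannonEntropy_le_logb_card hq

variable {X : Type*} [Fintype X] {P : X → ℝ} {W : X → Mat d}

lemma outcomeDist_avgState (V : unitaryGroup (Fin d) ℂ) (P : X → ℝ) (W : X → Mat d) (k : Fin d) :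
    outcomeDist V (avgState P W) k = ∑ x, P x * outcomeDist V (W x) k := by
  simp [outcomeDist, avgState, Matrix.mul_sum, Matrix.sum_mul, Matrix.sum_apply]

lemma isState_avgState (hP : IsProbDist P) (hW : ∀ x, IsState (W x)) : IsState (avgState P W) := by
  refine ⟨posSemidef_sum _ fun x _ => (hW x).1.smul (by exact_mod_cast hP.1 x), ?_⟩
  simp only [avgState, trace_sum, trace_smul, (hW _).2, smul_eq_mul, mul_one]
  exact_mod_cast hP.2

lemma mutualInfo_le_capacity (hP : IsProbDist P) (hW : ∀ x, IsState (W x)) :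
    mutualInfo P W ≤ capacity W := by
  refine le_csSup ⟨Real.logb 2 d, ?_⟩ ⟨P, hP, rfl⟩
  rintro _ ⟨Q, hQ, rfl⟩
  have hcond : 0 ≤ condEntropy Q W :=
    sum_nonneg fun x _ => mul_nonneg (hQ.1 x) (hW x).vnEntropy_nonneg
  exact (sub_le_self _ hcond).trans (isState_avgState hQ hW).vnEntropy_le_logb

end States

section TensorPower

variable {d n : ℕ}

lemma tensorPow_mul (A B : Fin n → Mat d) :
    tensorPow A * tensorPow B = tensorPow fun i => A i * B i := by
  ext j k
  simp only [tensorPow, mul_apply, of_apply, ← prod_mul_distrib, Fintype.prod_sum]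

lemma star_tensorPow (A : Fin n → Mat d) : star (tensorPow A) = tensorPow fun i => star (A i) := by
  ext j k
  simp [tensorPow, star_apply]

lemma tensorPow_diagonal (c : Fin n → Fin d → ℂ) :
    tensorPow (fun i => diagonal (c i)) = diagonal fun js => ∏ i, c i (js i) := by
  ext j k
  obtain rfl | hne := eq_or_ne j k
  · simp [tensorPow]
  · obtain ⟨i, hi⟩ := Function.ne_iff.mp hne
    rw [diagonal_apply_ne _ hne]
    exact prod_eq_zero (mem_univ i) (diagonal_apply_ne _ hi)

lemma tensorPow_one : tensorPow (fun _ : Fin n => (1 : Mat d)) = 1 := by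
  simpa using tensorPow_diagonal (n := n) (d := d) fun _ _ => 1

/-- The tensor product `U 0 ⊗ ⋯ ⊗ U (n-1)` as an element of the unitary group. -/
def tensorPowUnitary (U : Fin n → unitaryGroup (Fin d) ℂ) : unitaryGroup (Fin n → Fin d) ℂ :=
  ⟨tensorPow fun i => U i, mem_unitaryGroup_iff.mpr <| by
    simp [star_tensorPow, tensorPow_mul, tensorPow_one]⟩

lemma tensorPow_unitaryDiagonal (U : Fin n → unitaryGroup (Fin d) ℂ) (q : Fin n → Fin d → ℝ) :
    tensorPow (fun i => unitaryDiagonal (U i) (q i))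
      = unitaryDiagonal (tensorPowUnitary U) fun js => ∏ i, q i (js i) := by
  simp only [unitaryDiagonal_apply, tensorPowUnitary, Complex.ofReal_prod]
  rw [star_tensorPow, ← tensorPow_diagonal fun i k => (q i k : ℂ), tensorPow_mul, tensorPow_mul]

lemma outcomeDist_tensorPow {W : Fin n → Mat d} (hW : ∀ i, (W i).IsHermitian)
    (V : Fin n → unitaryGroup (Fin d) ℂ) (js : Fin n → Fin d) :
    outcomeDist (tensorPowUnitary V) (tensorPow W) js = ∏ i, outcomeDist (V i) (W i) (js i) := by
  have hreal (i : Fin n) (k : Fin d) :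
      (star (V i : Mat d) * W i * V i) k k = outcomeDist (V i) (W i) k :=
    ((isHermitian_conjTranspose_mul_mul (V i : Mat d) (hW i)).coe_re_apply_self k).symm
  rw [outcomeDist, tensorPowUnitary, star_tensorPow, tensorPow_mul, tensorPow_mul]
  simp only [tensorPow, of_apply, hreal]
  exact_mod_cast Complex.ofReal_re _

end TensorPower

section Types

variable {X κ : Type*} [Fintype X] [Fintype κ] {n : ℕ}

/-- The type (empirical distribution) of the sequence `xs`. -/
def empiricalDist (xs : Fin n → X) (x : X) : ℝ :=
  countIn x xs / n

lemma sum_comp_eq_mul_sum_empiricalDist (xs : Fin n → X) (g : X → ℝ) :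
    ∑ i, g (xs i) = n * ∑ x, empiricalDist xs x * g x := by
  rcases n.eq_zero_or_pos with rfl | hn
  · simp
  rw [← sum_fiberwise univ xs, mul_sum]
  refine sum_congr rfl fun x _ => ?_
  rw [sum_congr rfl fun i hi => congrArg g (mem_filter.mp hi).2, sum_const, nsmul_eq_mul,
    empiricalDist, countIn]
  field_simp

lemma isProbDist_empiricalDist (hn : 0 < n) (xs : Fin n → X) : IsProbDist (empiricalDist xs) := by
  refine ⟨fun x => by unfold empiricalDist; positivity, ?_⟩
  have h := sum_comp_eq_mul_sum_empiricalDist xs fun _ => 1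
  simpa [hn.ne'] using h.symm

lemma card_image_empiricalDist_le (S : Finset (Fin n → X)) :
    #(S.image empiricalDist) ≤ (n + 1) ^ Fintype.card X := by
  have hsub : S.image empiricalDist
      ⊆ Fintype.piFinset fun _ : X => (range (n + 1)).image fun k : ℕ => (k / n : ℝ) := by
    refine image_subset_iff.mpr fun xs _ => Fintype.mem_piFinset.mpr fun x => ?_
    refine mem_image_of_mem _ (mem_range_succ_iff.mpr ?_)
    simpa [countIn] using card_filter_le univ fun i => xs i = x
  refine (card_le_card hsub).trans ?_
  rw [Fintype.card_piFinset, prod_const, card_univ]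
  gcongr
  simpa using card_image_le (s := range (n + 1)) (f := fun k : ℕ => (k / n : ℝ))

lemma add_one_pow_le_two_rpow (hn : 0 < n) (a : ℕ) : (n + 1 : ℝ) ^ a ≤ 2 ^ (2 * a * √n) := by
  have hsqrt : 1 ≤ √(n : ℝ) := Real.one_le_sqrt.mpr (by exact_mod_cast hn)
  have hbernoulli : 1 + √n ≤ (2 : ℝ) ^ √(n : ℝ) := by
    simpa [one_add_one_eq_two] using
      one_add_mul_self_le_rpow_one_add (s := 1) (by norm_num) hsqrt
  calc (n + 1 : ℝ) ^ a ≤ ((1 + √n) ^ 2) ^ a := by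
        gcongr
        nlinarith [Real.sq_sqrt n.cast_nonneg]
    _ ≤ (((2 : ℝ) ^ √(n : ℝ)) ^ 2) ^ a := by gcongr
    _ = 2 ^ (2 * a * √n) := by
        rw [← pow_mul, ← Real.rpow_mul_natCast two_pos.le]
        push_cast
        ring_nf

theorem sum_prod_le_of_prod_mixture_lt {p : X → κ → ℝ} (hp : ∀ x, IsProbDist (p x))
    {xs : Fin n → X} {s : κ → ℝ} (hs : IsProbDist s)
    (hmix : ∀ k, s k = ∑ x, empiricalDist xs x * p x k) {δ : ℝ} (hδ : 0 < δ) (hn : 0 < n) :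
    ∑ js : Fin n → κ with ∏ i, s (js i) < 2 ^ (-(n * shannonEntropy s) - δ * √n),
      ∏ i, p (xs i) (js i) ≤ 16 * Fintype.card κ / δ ^ 2 := by
  have hnR : (0 : ℝ) < n := by exact_mod_cast hn
  have hτ : 0 < δ * √n := by positivity
  have hmarginal (k : κ) : ∑ i, p (xs i) k = n * s k := by
    rw [hmix, sum_comp_eq_mul_sum_empiricalDist xs fun x => p x k]
  have hsum (g : κ → ℝ) : ∑ i, ∑ k, p (xs i) k * g k = n * ∑ k, s k * g k := by
    rw [sum_comm]
    simp_rw [← sum_mul, hmarginal, mul_assoc, ← mul_sum]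
  have habs (i : Fin n) (k : κ) (hk : s k = 0) : p (xs i) k = 0 :=
    (sum_eq_zero_iff_of_nonneg fun i _ => (hp (xs i)).1 k).mp
      (by rw [hmarginal, hk, mul_zero]) i (mem_univ i)
  have hmean : ∑ i, ∑ k, p (xs i) k * Real.logb 2 (s k) = -(n * shannonEntropy s) := by
    rw [hsum, shannonEntropy, mul_neg, neg_neg]
  refine (sum_prod_le_of_prod_lt_rpow (fun i => hp (xs i)) (fun _ => hs.1) habs hmean hτ).trans ?_
  rw [hsum, mul_pow, Real.sq_sqrt hnR.le, mul_comm (δ ^ 2), mul_div_mul_left _ _ hnR.ne']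
  gcongr
  exact hs.sum_mul_logb_two_sq_le

theorem sum_prod_le_of_rpow_lt_prod_conditional {q : X → κ → ℝ} (hq : ∀ x, IsProbDist (q x))
    (xs : Fin n → X) {δ : ℝ} (hδ : 0 < δ) (hn : 0 < n) :
    ∑ js : Fin n → κ with
        2 ^ (-(n * ∑ x, empiricalDist xs x * shannonEntropy (q x)) + δ * √n)
          < ∏ i, q (xs i) (js i),
      ∏ i, q (xs i) (js i) ≤ 16 * Fintype.card κ / δ ^ 2 := by
  have hnR : (0 : ℝ) < n := by exact_mod_cast hn
  have hτ : 0 < δ * √n := by positivity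
  have hmean : ∑ i, ∑ k, q (xs i) k * Real.logb 2 (q (xs i) k)
      = -(n * ∑ x, empiricalDist xs x * shannonEntropy (q x)) := by
    rw [← sum_comp_eq_mul_sum_empiricalDist xs fun x => shannonEntropy (q x)]
    simp [shannonEntropy]
  have hmoment : ∑ i, ∑ k, q (xs i) k * Real.logb 2 (q (xs i) k) ^ 2
      ≤ n * (16 * Fintype.card κ) := by
    simpa using sum_le_card_nsmul univ _ _ fun i _ => (hq (xs i)).sum_mul_logb_two_sq_le
  refine (sum_prod_le_of_rpow_lt_prod (fun i => hq (xs i)) hmean hτ).trans ?_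
  rw [mul_pow, Real.sq_sqrt hnR.le, mul_comm (δ ^ 2), ← div_div]
  gcongr
  rwa [div_le_iff₀' hnR]

end Types

section Codes

open scoped MatrixOrder

variable {X M' : Type*} [Fintype X] [Fintype M'] {d n : ℕ} {W : X → Mat d} {lam δ : ℝ}
  {M : Finset M'} {f : M' → Fin n → X} {D : M' → MatPow d n}

theorem IsCode.card_mul_le_of_constant_composition (hcode : IsCode W lam M f D)
    (hW : ∀ x, IsState (W x)) {P : X → ℝ} (hP : IsProbDist P)
    (htype : ∀ m ∈ M, empiricalDist (f m) = P) (hδ : 0 < δ) (hn : 0 < n) :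
    #M * (1 - lam - 48 * d / δ ^ 2) ≤ 2 * 2 ^ (n * mutualInfo P W + 2 * δ * √n) := by
  obtain ⟨hDpos, hDsum, hdec⟩ := hcode
  obtain ⟨V, s, hs, hPW, hHs⟩ := (isState_avgState hP hW).exists_eq_unitaryDiagonal
  choose U q hq hWU hHq using fun x => (hW x).exists_eq_unitaryDiagonal
  let α : ℝ := n * shannonEntropy s + δ * √n
  let β : ℝ := -(n * ∑ x, P x * shannonEntropy (q x)) + δ * √n
  let A : Set (Fin n → Fin d) := {js | (2 : ℝ) ^ (-α) ≤ ∏ i, s (js i)}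
  have hdiag (m : M') : tensorPow (fun i => W (f m i))
      = unitaryDiagonal (tensorPowUnitary fun i => U (f m i)) fun js => ∏ i, q (f m i) (js i) := by
    rw [← tensorPow_unitaryDiagonal fun i => U (f m i)]
    exact congrArg tensorPow (funext fun i => hWU (f m i))
  have hmix (k : Fin d) : s k = ∑ x, P x * outcomeDist V (W x) k := by
    rw [← outcomeDist_avgState, hPW, outcomeDist_unitaryDiagonal]
  have hhigh (m) (hm : m ∈ M) :
      ∑ js : Fin n → Fin d with 2 ^ β < ∏ i, q (f m i) (js i), ∏ i, q (f m i) (js i)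
        ≤ 16 * d / δ ^ 2 := by
    simpa [htype m hm] using sum_prod_le_of_rpow_lt_prod_conditional hq (f m) hδ hn
  have hout (m) (hm : m ∈ M) : ∑ js with js ∉ A, outcomeDist (tensorPowUnitary fun _ => V)
      (tensorPow fun i => W (f m i)) js ≤ 16 * d / δ ^ 2 := by
    have h := sum_prod_le_of_prod_mixture_lt (xs := f m)
      (fun x => (hW x).isProbDist_outcomeDist V) hs (by simpa [htype m hm] using hmix) hδ hn
    rw [← neg_add'] at h
    simpa [A, α, outcomeDist_tensorPow fun i => (hW (f m i)).1.isHermitian] using h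
  have hcard : (#{js | js ∈ A} : ℝ) ≤ 2 ^ α := by
    simpa [A] using (IsProbDist.pi fun _ : Fin n => hs).card_filter_rpow_neg_le α
  calc (#M : ℝ) * (1 - lam - 48 * d / δ ^ 2) = #M * (1 - lam - 3 * (16 * d / δ ^ 2)) := by ring
    _ ≤ 2 * 2 ^ β * (#{js | js ∈ A} : ℝ) :=
        card_mul_sub_le_two_mul_card (fun m => (hDpos m).nonneg) hDsum
          (fun m _ js => prod_nonneg fun i _ => (hq (f m i)).1 (js i)) (by positivity)
          (by simpa only [hdiag] using hdec) hhigh (by simpa only [hdiag] using hout)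
    _ ≤ 2 * 2 ^ β * 2 ^ α := by gcongr
    _ = 2 * 2 ^ (n * mutualInfo P W + 2 * δ * √n) := by
        rw [mul_assoc, ← Real.rpow_add two_pos]
        simp only [α, β, mutualInfo, condEntropy, hHs, hHq]
        ring_nf

theorem IsCode.card_mul_le (hcode : IsCode W lam M f D) (hW : ∀ x, IsState (W x)) (hδ : 0 < δ)
    (hn : 0 < n) :
    #M * (1 - lam - 48 * d / δ ^ 2)
      ≤ (n + 1) ^ Fintype.card X * (2 * 2 ^ (n * capacity W + 2 * δ * √n)) := by
  let types : Finset (X → ℝ) := M.image fun m => empiricalDist (f m)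
  have hfiber : ∀ P ∈ types, #{m ∈ M | empiricalDist (f m) = P} * (1 - lam - 48 * d / δ ^ 2)
      ≤ 2 * 2 ^ (n * capacity W + 2 * δ * √n) := by
    intro P hPtypes
    obtain ⟨m, -, rfl⟩ := mem_image.mp hPtypes
    have hP := isProbDist_empiricalDist hn (f m)
    have hsub : IsCode W lam {m' ∈ M | empiricalDist (f m') = empiricalDist (f m)} f D :=
      ⟨hcode.1, hcode.2.1, fun m' hm' => hcode.2.2 m' (mem_filter.mp hm').1⟩
    refine (hsub.card_mul_le_of_constant_composition hW hP
      (fun m' hm' => (mem_filter.mp hm').2) hδ hn).trans ?_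
    gcongr
    exacts [one_le_two, mutualInfo_le_capacity hP hW]
  have htypes : (#types : ℝ) ≤ (n + 1) ^ Fintype.card X := by
    have h := card_image_empiricalDist_le (M.image f)
    rw [image_image] at h
    exact_mod_cast h
  calc (#M : ℝ) * (1 - lam - 48 * d / δ ^ 2)
      = ∑ P ∈ types, #{m ∈ M | empiricalDist (f m) = P} * (1 - lam - 48 * d / δ ^ 2) := by
        rw [← sum_mul, card_eq_sum_card_image fun m => empiricalDist (f m)]
        push_cast
        rfl
    _ ≤ #types * (2 * 2 ^ (n * capacity W + 2 * δ * √n)) := by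
        simpa only [nsmul_eq_mul] using sum_le_card_nsmul _ _ _ hfiber
    _ ≤ _ := by gcongr

end Codes

lemma le_two_rpow_logb_mul_sqrt {c : ℝ} (hc : 1 ≤ c) {n : ℕ} (hn : 0 < n) :
    c ≤ 2 ^ (Real.logb 2 c * √n) :=
  calc c = 2 ^ Real.logb 2 c :=
        (Real.rpow_logb two_pos one_lt_two.ne' (one_pos.trans_le hc)).symm
    _ ≤ 2 ^ (Real.logb 2 c * √n) :=
        Real.rpow_le_rpow_of_exponent_le one_le_two <|
          le_mul_of_one_le_right (Real.logb_nonneg one_lt_two hc)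
            (Real.one_le_sqrt.mpr (Nat.one_le_cast.mpr hn))

/-- **Theorem 3 (Strong converse).** For every `λ ∈ (0,1)` there is a constant
`K(λ,a,d)` such that every `(n,λ)`-code `(f,D)` for a cq-DMC `W` satisfies
`|M| ≤ exp₂(n C(W) + K√n)`. -/
theorem strong_converse (a d : ℕ) (lam : ℝ) (hlam : lam ∈ Set.Ioo (0 : ℝ) 1) :
    ∃ K : ℝ, ∀ (X : Type) [Fintype X], Fintype.card X = a →
      ∀ (W : X → Mat d), (∀ x, IsState (W x)) →
      ∀ (n : ℕ), 0 < n →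
      ∀ (M' : Type) (_ : Fintype M') (M : Finset M') (f : M' → Fin n → X)
        (D : M' → MatPow d n), IsCode W lam M f D →
        (M.card : ℝ) ≤ exp2 ((n : ℝ) * capacity W + K * Real.sqrt n) := by
  have hgap : 0 < (1 - lam) / 2 := half_pos (sub_pos.mpr hlam.2)
  obtain ⟨δ, hδgap, hδ⟩ : ∃ δ : ℝ, 48 * d / δ ^ 2 ≤ (1 - lam) / 2 ∧ 0 < δ :=
    (((Filter.Tendsto.const_div_atTop (Filter.tendsto_pow_atTop two_ne_zero) _).eventually_le_const
      hgap).and (Filter.eventually_gt_atTop 0)).exists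
  let c : ℝ := 2 / ((1 - lam) / 2)
  refine ⟨2 * a + 2 * δ + Real.logb 2 c, ?_⟩
  intro X _ hX W hW n hn M' _ M f D hcode
  have hc : c ≤ 2 ^ (Real.logb 2 c * √n) :=
    le_two_rpow_logb_mul_sqrt ((one_le_div hgap).mpr (by linarith [hlam.1])) hn
  have hcard : #M * ((1 - lam) / 2) ≤ (n + 1) ^ a * (2 * 2 ^ (n * capacity W + 2 * δ * √n)) :=
    (mul_le_mul_of_nonneg_left (by linarith) (#M).cast_nonneg).trans
      (hX ▸ hcode.card_mul_le hW hδ hn)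
  calc (#M : ℝ) ≤ (n + 1) ^ a * (2 * 2 ^ (n * capacity W + 2 * δ * √n)) / ((1 - lam) / 2) :=
        (le_div_iff₀ hgap).mpr hcard
    _ = (n + 1) ^ a * c * 2 ^ (n * capacity W + 2 * δ * √n) := by ring
    _ ≤ 2 ^ (2 * a * √n) * 2 ^ (Real.logb 2 c * √n) * 2 ^ (n * capacity W + 2 * δ * √n) := by
        gcongr
        exact add_one_pow_le_two_rpow hn a
    _ = exp2 (n * capacity W + (2 * a + 2 * δ + Real.logb 2 c) * √n) := by
        rw [exp2, ← Real.rpow_add two_pos, ← Real.rpow_add two_pos]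
        ring_nf
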